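/- Define α_n(I) = #{π ∈ S_n : D(π) ⊆ I} and α^cyc_n(I) = #{n-cycles π : D(π) ⊆ I}. Then α^cyc_n(I) = (1/n) Σ_{d ∣ gcd(I ∪ {n})} μ(d) · α_{n/d}(I/d), where μ is the Möbius function. -/

import Mathlib

/-!
The proof counts periodic words in two ways, following Gessel and Reutenauer. Cut `[n]` into blocks
at the elements of `I`; then `D(π) ⊆ I` says that `π` is increasing on each block
(`descSet_subset_iff`). A word has content `I` if the `c`-th letter occurs as often as the `c`-th
block has elements.

* Permutations with `D(π) ⊆ I` correspond to words with content `I`, by listing for each position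
  the block of its preimage; stable sorting is the inverse (`alphaP_eq_card_words`).
* Pairs (`n`-cycle `π` with `D(π) ⊆ I`, point `x`) correspond to primitive words with content `I`,
  by recording the blocks visited by `x, π x, π² x, …`. Since `π` is increasing on blocks, the order
  of the points is the lexicographic order of their itineraries (`itin_strictMono`). Hence the
  itineraries are primitive and determine `π` and `x` (`itin_injective`); conversely, ranking the
  rotations of a primitive word reconstructs the cycle (`itin_surjective`). So `n * alphaC n I` is
  the number of primitive words (`card_cycles`).
* Words with content `I` that are `d`-th powers correspond to words of length `n / d` with content
  `I / d` (`isWord_div_iff`), and a word can be a `d`-th power only if `d` divides `gcd (I ∪ {n})`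
  (`dvd_of_isWord`). Summing `μ d` over all `d` for which a word is a `d`-th power gives `1` for
  primitive words and `0` otherwise (`sum_moebius_periodic`); interchanging the two sums yields the
  formula.
-/

open Finset

/-- The value `π(i)` of a permutation of `[n]`, in 1-based position notation. -/
def permVal {n : ℕ} (π : Equiv.Perm (Fin n)) (i : ℕ) : ℕ :=
  if h : i - 1 < n then ((π ⟨i - 1, h⟩ : Fin n) : ℕ) else 0

/-- The descent set `D(π) = {i ∈ [n-1] : π(i) > π(i+1)}` (1-based). -/
def descSet {n : ℕ} (π : Equiv.Perm (Fin n)) : Finset ℕ :=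
  (Finset.Ioo 0 n).filter fun i => permVal π (i + 1) < permVal π i

/-- `π` is an `n`-cycle: a permutation of `[n]` consisting of a single cycle of length `n`. -/
def IsFullCycle {n : ℕ} (π : Equiv.Perm (Fin n)) : Prop :=
  ∀ x y : Fin n, ∃ k : ℕ, (π ^ k) x = y

/-- `α_n(I)`: number of permutations of `[n]` with descent set contained in `I`. -/
noncomputable def alphaP (n : ℕ) (I : Finset ℕ) : ℕ :=
  Nat.card {π : Equiv.Perm (Fin n) // descSet π ⊆ I}

/-- `α^cyc_n(I)`: number of `n`-cycles with descent set contained in `I`. -/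
noncomputable def alphaC (n : ℕ) (I : Finset ℕ) : ℕ :=
  Nat.card {π : Equiv.Perm (Fin n) // IsFullCycle π ∧ descSet π ⊆ I}

/-- `β_n(I)`: number of permutations of `[n]` with descent set exactly `I`. -/
noncomputable def betaP (n : ℕ) (I : Finset ℕ) : ℕ :=
  Nat.card {π : Equiv.Perm (Fin n) // descSet π = I}

/-- `β^cyc_n(I)`: number of `n`-cycles with descent set exactly `I`. -/
noncomputable def betaC (n : ℕ) (I : Finset ℕ) : ℕ :=
  Nat.card {π : Equiv.Perm (Fin n) // IsFullCycle π ∧ descSet π = I}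

/-- `I/d = {i/d : i ∈ I, d ∣ i}`. -/
def divSet (I : Finset ℕ) (d : ℕ) : Finset ℕ :=
  (I.filter fun i => d ∣ i).image (· / d)

/-! ### Blocks and words -/

/-- The index (from `0`) of the block of `x`, when positions `0, 1, 2, …` are cut in front of each
element of `I`. Positions here are 0-based, so a descent at `i` sits between `i - 1` and `i`. -/
def blk (I : Finset ℕ) (x : ℕ) : ℕ := #{i ∈ I | i ≤ x}

/-- A word of length `n` with content `I`, encoded as an `n`-periodic sequence: each letter `c`
occurs in a period as often as the `c`-th block of `[n]` cut at `I` has elements. -/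
def IsWord (n : ℕ) (I : Finset ℕ) (f : ℕ → ℕ) : Prop :=
  Function.Periodic f n ∧ ∀ c, Nat.count (fun x => f x = c) n = Nat.count (fun x => blk I x = c) n

lemma blk_mono (I : Finset ℕ) : Monotone (blk I) := fun x y h =>
  card_le_card fun i hi => by simp only [mem_filter] at *; exact ⟨hi.1, hi.2.trans h⟩

lemma blk_lt_iff {I : Finset ℕ} {i x : ℕ} (hi : i ∈ I) : blk I x < blk I i ↔ x < i := by
  constructor
  · intro h
    by_contra! hx
    exact absurd (blk_mono I hx) (by omega)
  · intro h
    refine card_lt_card ⟨fun j hj => ?_, fun hs => ?_⟩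
    · simp only [mem_filter] at *; exact ⟨hj.1, hj.2.trans h.le⟩
    · have := hs (mem_filter.2 ⟨hi, le_rfl⟩)
      simp only [mem_filter] at this
      omega

lemma blk_pred_eq {I : Finset ℕ} {i : ℕ} (hi : i ∉ I) (h0 : 0 < i) : blk I (i - 1) = blk I i := by
  unfold blk
  congr 1
  refine filter_congr fun j hj => ?_
  have : j ≠ i := fun h => hi (h ▸ hj)
  omega

/-- Descents are confined to `I` exactly when the permutation increases along each block. -/
lemma descSet_subset_iff {n : ℕ} (π : Equiv.Perm (Fin n)) (I : Finset ℕ) :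
    descSet π ⊆ I ↔ ∀ x y : Fin n, x < y → blk I x = blk I y → π x < π y := by
  constructor
  · intro h
    have key : ∀ k (x : Fin n) (hk : x.val + k < n), blk I x = blk I (x + k) →
        π x ≤ π ⟨x + k, hk⟩ := by
      intro k
      induction k with
      | zero => intro x hk _; exact le_rfl
      | succ k ih =>
        intro x hk hb
        have h1 : blk I x ≤ blk I (x + k) := blk_mono I (by omega)
        have h2 : blk I (x + k) ≤ blk I (x + (k + 1)) := blk_mono I (by omega)
        refine (ih x (by omega) (by omega)).trans ?_
        by_contra! hlt
        have hmem : x.val + k + 1 ∈ descSet π := by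
          rw [descSet, mem_filter, mem_Ioo, permVal, permVal]
          refine ⟨by omega, ?_⟩
          rw [dif_pos (by omega), dif_pos (by omega)]
          exact hlt
        have := (blk_lt_iff (h hmem) (x := x.val + k)).2 (by omega)
        rw [← add_assoc] at hb
        omega
    intro x y hxy hb
    have hv : x.val < y.val := hxy
    have := key (y - x) x (by omega) (by rw [hb]; congr 1; omega)
    have e : (⟨x + (y.val - x), by omega⟩ : Fin n) = y := by ext; simp; omega
    rw [e] at this
    exact lt_of_le_of_ne this fun he => hxy.ne (π.injective he)
  · intro h i hi
    rw [descSet, mem_filter, mem_Ioo, permVal, permVal] at hi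
    by_contra hI
    obtain ⟨⟨h0, h1⟩, h2⟩ := hi
    rw [dif_pos (by omega), dif_pos (by omega)] at h2
    have := h ⟨i - 1, by omega⟩ ⟨i + 1 - 1, by omega⟩ (by simp; omega)
      (by simpa using blk_pred_eq hI h0)
    exact absurd h2 (by simpa using this.le)

lemma card_filter_fin (n : ℕ) (p : ℕ → Prop) [DecidablePred p] :
    #{x : Fin n | p x} = Nat.count p n := by
  rw [Nat.count_eq_card_filter_range, card_filter, card_filter]
  exact Fin.sum_univ_eq_sum_range (fun i => if p i then 1 else 0) n

/-- Equal letter counts amount to being rearrangements of each other. -/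
lemma exists_perm_iff {n : ℕ} (f g : ℕ → ℕ) :
    (∀ c, Nat.count (fun x => f x = c) n = Nat.count (fun x => g x = c) n) ↔
      ∃ σ : Equiv.Perm (Fin n), ∀ x, g (σ x) = f x := by
  simp only [← card_filter_fin]
  constructor
  · intro h
    have e : ∀ c, Nonempty ({x : Fin n // f x = c} ≃ {x : Fin n // g x = c}) := fun c =>
      Fintype.card_eq.1 (by rw [Fintype.card_subtype, Fintype.card_subtype]; exact h c)
    exact ⟨Equiv.ofFiberEquiv (f := fun x : Fin n => f x) (g := fun x : Fin n => g x)
      fun c => (e c).some, fun x => Equiv.ofFiberEquiv_map (g := fun x : Fin n => g x) _ x⟩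
  · rintro ⟨σ, h⟩ c
    refine card_equiv σ fun x => by simp [h]

/-- Sorting a word with content `I` yields the block sequence. -/
lemma eq_blk_of_monotone {n : ℕ} {I : Finset ℕ} {f : ℕ → ℕ}
    (hf : ∀ c, Nat.count (fun x => f x = c) n = Nat.count (fun x => blk I x = c) n)
    (s : Equiv.Perm (Fin n)) (hs : Monotone fun x => f (s x)) (x : Fin n) :
    f (s x) = blk I x := by
  obtain ⟨σ, hσ⟩ := (exists_perm_iff f (blk I)).1 hf
  have hb : Monotone ((fun x : Fin n => blk I x) ∘ (Equiv.refl _ : Equiv.Perm (Fin n))) :=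
    fun a b h => blk_mono I h
  have hm : Monotone ((fun x : Fin n => blk I x) ∘ (s.trans σ)) := by
    intro a b h
    simpa [hσ] using hs h
  have := congrFun (Tuple.unique_monotone hm hb) x
  simpa [hσ] using this

lemma apply_mod {n : ℕ} {f : ℕ → ℕ} (hf : Function.Periodic f n) (k : ℕ) : f (k % n) = f k :=
  hf.map_mod_nat k

lemma Fin.val_ofNat_lt {n : ℕ} [NeZero n] (x : Fin n) : Fin.ofNat n x.val = x := by
  ext; simp

/-- Permutations with descent set inside `I` correspond to words with content `I`: `π` records
the positions of the letters, in stable sorted order. -/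
lemma alphaP_eq_card_words {n : ℕ} (hn : 0 < n) (I : Finset ℕ) :
    Nonempty ({π : Equiv.Perm (Fin n) // descSet π ⊆ I} ≃ {f // IsWord n I f}) := by
  have : NeZero n := ⟨hn.ne'⟩
  refine ⟨Equiv.ofBijective (fun π => ⟨fun k => blk I (π.1.symm (Fin.ofNat n k)), ?_, ?_⟩) ⟨?_, ?_⟩⟩
  · intro k
    have : Fin.ofNat n (k + n) = Fin.ofNat n k := by ext; simp
    simp only [this]
  · rw [exists_perm_iff]
    exact ⟨π.1.symm, fun x => by simp only [Fin.val_ofNat_lt]⟩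
  · have key : ∀ π : {π : Equiv.Perm (Fin n) // descSet π ⊆ I},
        π.1 = Tuple.sort (fun x : Fin n => blk I (π.1.symm x)) := by
      intro π
      refine Tuple.eq_sort_iff.2 ⟨fun a b h => by simpa using blk_mono I h, fun i j hij h => ?_⟩
      exact (descSet_subset_iff π.1 I).1 π.2 i j hij (by simpa using h)
    intro π τ h
    have h' := congrArg Subtype.val h
    apply Subtype.ext
    rw [key π, key τ]
    congr 1
    funext x
    have := congrFun h' x.val
    simpa only [Fin.val_ofNat_lt] using this
  · rintro ⟨f, hp, hc⟩
    set s := Tuple.sort (fun x : Fin n => f x) with hs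
    obtain ⟨h1, h2⟩ := Tuple.eq_sort_iff.1 hs
    have hb := eq_blk_of_monotone hc s h1
    refine ⟨⟨s, (descSet_subset_iff s I).2 fun x y hxy h => h2 x y hxy (by simp [hb, h])⟩, ?_⟩
    apply Subtype.ext
    funext k
    simp only
    rw [← hb, Equiv.apply_symm_apply, Fin.val_ofNat, apply_mod hp]

/-! ### Periods of words -/

/-- The shift of sequences; `f` has period `k` iff `k` is a period of `f` under the shift. -/
def shift (f : ℕ → ℕ) : ℕ → ℕ := fun k => f (k + 1)

/-- The least positive period of a periodic sequence (`0` for a sequence with no period). -/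
noncomputable def per (f : ℕ → ℕ) : ℕ := Function.minimalPeriod shift f

lemma periodic_iff_per_dvd (f : ℕ → ℕ) (k : ℕ) : Function.Periodic f k ↔ per f ∣ k := by
  have h : ∀ k, shift^[k] f = fun x => f (x + k) := by
    intro k
    induction k with
    | zero => rfl
    | succ k ih => rw [Function.iterate_succ_apply', ih]; funext x; simp [shift]; congr 1; ring
  rw [per, ← Function.isPeriodicPt_iff_minimalPeriod_dvd, Function.IsPeriodicPt,
    Function.IsFixedPt, h]
  exact ⟨fun h => funext h, fun h => congrFun h⟩

lemma count_of_periodic {f : ℕ → ℕ} {m : ℕ} (hf : Function.Periodic f m) (d c : ℕ) :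
    Nat.count (fun x => f x = c) (d * m) = d * Nat.count (fun x => f x = c) m := by
  induction d with
  | zero => simp
  | succ d ih =>
    rw [add_mul, one_mul, Nat.count_add, ih, add_mul, one_mul]
    congr 2
    funext k
    rw [add_comm, show f (k + d * m) = f k from by simpa using hf.nsmul d k]

lemma count_div (p : ℕ → Prop) [DecidablePred p] {d : ℕ} (hd : 0 < d) (m : ℕ) :
    Nat.count (fun x => p (x / d)) (d * m) = d * Nat.count p m := by
  induction m with
  | zero => simp
  | succ m ih =>
    rw [Nat.mul_succ, Nat.count_add, ih, Nat.count_succ, mul_add]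
    congr 1
    rw [Nat.count_eq_card_filter_range]
    have : ∀ x ∈ range d, (p ((d * m + x) / d) ↔ p m) := by
      intro x hx
      rw [Nat.mul_add_div hd, Nat.div_eq_of_lt (mem_range.1 hx), add_zero]
    rw [filter_congr this]
    split_ifs with h <;> simp [h]

lemma blk_divSet {I : Finset ℕ} {d : ℕ} (hd : 0 < d) (hI : ∀ i ∈ I, d ∣ i) (x : ℕ) :
    blk (divSet I d) (x / d) = blk I x := by
  unfold blk divSet
  rw [filter_true_of_mem hI, filter_image, card_image_of_injOn]
  · congr 1
    refine filter_congr fun i hi => ?_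
    obtain ⟨j, rfl⟩ := hI i hi
    rw [Nat.mul_div_cancel_left _ hd, Nat.le_div_iff_mul_le hd, mul_comm]
  · intro a ha b hb h
    simp only [coe_filter] at ha hb
    exact Nat.div_left_inj (hI a ha.1) (hI b hb.1) |>.1 h

/-- Words with content `I` and period `n / d` are exactly the words of length `n / d` with
content `I / d`. -/
lemma isWord_div_iff {I : Finset ℕ} {d m : ℕ} (hd : 0 < d) (hI : ∀ i ∈ I, d ∣ i) (f : ℕ → ℕ) :
    IsWord (d * m) I f ∧ Function.Periodic f m ↔ IsWord m (divSet I d) f := by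
  have key : ∀ c, Nat.count (fun x => blk I x = c) (d * m) =
      d * Nat.count (fun x => blk (divSet I d) x = c) m := by
    intro c
    rw [← count_div _ hd]
    simp only [blk_divSet hd hI]
  constructor
  · rintro ⟨⟨_, hc⟩, hp⟩
    refine ⟨hp, fun c => ?_⟩
    have := hc c
    rw [key, count_of_periodic hp] at this
    exact Nat.eq_of_mul_eq_mul_left hd this
  · rintro ⟨hp, hc⟩
    refine ⟨⟨by simpa using hp.nsmul d, fun c => ?_⟩, hp⟩
    rw [key, count_of_periodic hp, hc]

/-- A word that is a `d`-th power has all its letter multiplicities divisible by `d`; the elements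
of `I` are partial sums of these multiplicities. -/
lemma dvd_of_isWord {n m d : ℕ} {I : Finset ℕ} (hI : I ⊆ Ioo 0 n) {f : ℕ → ℕ}
    (hw : IsWord n I f) (hp : Function.Periodic f m) (hn : n = d * m) {i : ℕ} (hi : i ∈ I) :
    d ∣ i := by
  have hin := mem_Ioo.1 (hI hi)
  have h1 : #{x ∈ range n | blk I x < blk I i} = i := by
    have : {x ∈ range n | blk I x < blk I i} = range i := by
      ext x
      simp only [mem_filter, mem_range, blk_lt_iff hi]
      omega
    rw [this, card_range]
  have h2 : #{x ∈ range n | blk I x < blk I i} =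
      ∑ c ∈ range (blk I i), Nat.count (fun x => blk I x = c) n := by
    rw [card_eq_sum_card_fiberwise (f := blk I) (t := range (blk I i))]
    · refine sum_congr rfl fun c hc => ?_
      rw [Nat.count_eq_card_filter_range, filter_filter]
      congr 1
      refine filter_congr fun x _ => ?_
      rw [mem_range] at hc
      omega
    · intro x hx
      simpa using (mem_filter.1 hx).2
  rw [← h1, h2]
  refine dvd_sum fun c _ => ?_
  rw [← hw.2 c, hn, count_of_periodic hp]
  exact dvd_mul_right _ _

/-! ### Cycles and primitive words -/

lemma IsFullCycle.isCycleOn {n : ℕ} {π : Equiv.Perm (Fin n)} (h : IsFullCycle π) :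
    π.IsCycleOn ((univ : Finset (Fin n)) : Set (Fin n)) := by
  refine ⟨by simp [Set.bijOn_univ], fun x _ y _ => ?_⟩
  obtain ⟨k, hk⟩ := h x y
  exact ⟨k, by simpa using hk⟩

lemma IsFullCycle.pow_apply_eq {n : ℕ} {π : Equiv.Perm (Fin n)} (h : IsFullCycle π) (x : Fin n)
    (k : ℕ) : (π ^ k) x = x ↔ n ∣ k := by
  simpa using h.isCycleOn.pow_apply_eq (mem_univ x) (n := k)

/-- The itinerary of `x` under `π`: the blocks visited by `x, π x, π² x, …`. -/
def itin {n : ℕ} (I : Finset ℕ) (π : Equiv.Perm (Fin n)) (x : Fin n) : ℕ → ℕ :=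
  fun k => blk I ((π ^ k) x)

/-- For an `n`-cycle that increases along blocks, comparing points is comparing their itineraries
lexicographically. Distinct points have distinct itineraries because otherwise `y < π ^ j y` would
propagate to `y < π ^ j y < π ^ (2 * j) y < …`. -/
lemma itin_strictMono {n : ℕ} {I : Finset ℕ} {π : Equiv.Perm (Fin n)} (hc : IsFullCycle π)
    (hD : descSet π ⊆ I) : StrictMono fun x => toLex (itin I π x) := by
  rw [descSet_subset_iff] at hD
  intro y z hyz
  have step : ∀ k, (∀ j < k, itin I π y j = itin I π z j) → (π ^ k) y < (π ^ k) z := by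
    intro k
    induction k with
    | zero => intro _; simpa using hyz
    | succ k ih =>
      intro h
      rw [pow_succ', Equiv.Perm.mul_apply, Equiv.Perm.mul_apply]
      exact hD _ _ (ih fun j hj => h j (by omega)) (h k (by omega))
  by_cases hall : ∀ j, itin I π y j = itin I π z j
  · exfalso
    obtain ⟨j, rfl⟩ := hc y z
    have hmono : StrictMono fun m : ℕ => (π ^ (j * m)) y := by
      refine strictMono_nat_of_lt_succ fun m => ?_
      have := step (j * m) fun i _ => hall i
      rwa [← Equiv.Perm.mul_apply, ← pow_add] at this
    exact not_injective_infinite_finite _ hmono.injective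
  · push Not at hall
    classical
    have hmin : ∀ j < Nat.find hall, itin I π y j = itin I π z j := fun j hj =>
      not_not.1 (Nat.find_min hall hj)
    refine ⟨Nat.find hall, hmin, ?_⟩
    exact lt_of_le_of_ne (blk_mono I (step _ hmin).le) (Nat.find_spec hall)

lemma itin_pow {n : ℕ} (I : Finset ℕ) (π : Equiv.Perm (Fin n)) (x : Fin n) (i : ℕ) :
    itin I π ((π ^ i) x) = fun k => itin I π x (k + i) := by
  funext k
  simp [itin, pow_add]

lemma itin_isWord {n : ℕ} {I : Finset ℕ} {π : Equiv.Perm (Fin n)} (hc : IsFullCycle π)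
    (x : Fin n) : IsWord n I (itin I π x) := by
  refine ⟨fun k => ?_, ?_⟩
  · rw [itin, itin, pow_add, Equiv.Perm.mul_apply, (hc.pow_apply_eq x n).2 dvd_rfl]
  · have hs : Function.Surjective fun k : Fin n => (π ^ k.val) x := by
      intro y
      obtain ⟨k, hk, h⟩ := hc.isCycleOn.exists_pow_eq (mem_univ x) (mem_univ y)
      exact ⟨⟨k, by simpa using hk⟩, h⟩
    rw [exists_perm_iff]
    exact ⟨Equiv.ofBijective _ hs.bijective_of_finite, fun k => rfl⟩

lemma itin_per {n : ℕ} {I : Finset ℕ} {π : Equiv.Perm (Fin n)} (hc : IsFullCycle π)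
    (hD : descSet π ⊆ I) (x : Fin n) : per (itin I π x) = n := by
  refine Nat.dvd_antisymm ((periodic_iff_per_dvd _ _).1 (itin_isWord hc x).1) ?_
  rw [← hc.pow_apply_eq x]
  apply (itin_strictMono hc hD).injective
  simp only [itin_pow]
  congr 1
  exact funext ((periodic_iff_per_dvd _ _).2 dvd_rfl)

/-- A pair (`n`-cycle, base point) is determined by the itinerary of the base point: the point
`π ^ i x` is recovered as the rank of the `i`-th rotation among all rotations. -/
lemma itin_injective {n : ℕ} {I : Finset ℕ} {π τ : Equiv.Perm (Fin n)} {x y : Fin n}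
    (hπ : IsFullCycle π) (hπD : descSet π ⊆ I) (hτ : IsFullCycle τ) (hτD : descSet τ ⊆ I)
    (h : itin I π x = itin I τ y) : π = τ ∧ x = y := by
  have hlt : ∀ i j : ℕ, (π ^ i) x < (π ^ j) x ↔ (τ ^ i) y < (τ ^ j) y := by
    intro i j
    rw [← (itin_strictMono hπ hπD).lt_iff_lt, ← (itin_strictMono hτ hτD).lt_iff_lt]
    simp only [itin_pow, h]
  have heq : ∀ i j : ℕ, (π ^ i) x = (π ^ j) x → (τ ^ i) y = (τ ^ j) y := by
    intro i j hij
    refine le_antisymm ?_ ?_ <;> rw [← not_lt, ← hlt, hij] <;> exact lt_irrefl _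
  choose k hk using fun z => hπ x z
  have hg : StrictMono fun z => (τ ^ k z) y := by
    intro a b hab
    rwa [← hlt, hk, hk]
  have hid : ∀ z, (τ ^ k z) y = z := fun z => congrFun
    (hg.range_inj strictMono_id |>.1 (by
      rw [(Finite.injective_iff_surjective.1 hg.injective).range_eq]; simp)) z
  have hall : ∀ i : ℕ, (τ ^ i) y = (π ^ i) x := fun i =>
    (heq i (k ((π ^ i) x)) (hk _).symm).trans (hid _)
  have hxy : x = y := (hall 0).symm
  refine ⟨Equiv.ext fun z => ?_, hxy⟩
  have h1 := hall (k z + 1)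
  rw [pow_succ', pow_succ', Equiv.Perm.mul_apply, Equiv.Perm.mul_apply, hall, hk] at h1
  exact h1.symm

/-- Every primitive word is an itinerary: rank its rotations lexicographically and let `π` send
the rank of each rotation to the rank of the next one. -/
lemma itin_surjective {n : ℕ} (hn : 0 < n) {I : Finset ℕ} {f : ℕ → ℕ} (hf : IsWord n I f)
    (hper : per f = n) :
    ∃ (π : Equiv.Perm (Fin n)) (x : Fin n), IsFullCycle π ∧ descSet π ⊆ I ∧ itin I π x = f := by
  have : NeZero n := ⟨hn.ne'⟩
  obtain ⟨hp, hc⟩ := hf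
  let L : ℕ → Lex (ℕ → ℕ) := fun i => toLex fun k => f (k + i)
  have hLmod : ∀ i, L (i % n) = L i := fun i => by
    refine congrArg toLex (funext fun k => ?_)
    rw [← apply_mod hp, ← apply_mod hp (k + i)]
    simp
  have hLne : ∀ i j : Fin n, i < j → L i ≠ L j := by
    intro i j hij h
    have h0 : ∀ k, f (k + i) = f (k + j) := congrFun (toLex.injective h)
    have hij' : i.val < j.val := hij
    have : Function.Periodic f (j.val - i.val) := by
      intro k
      -- shift far enough to the right for `i` to be subtracted
      have e := h0 (k + (n - i.val))
      rw [show k + (n - i.val) + i.val = k + n by omega,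
        show k + (n - i.val) + j.val = k + (j.val - i.val) + n by omega, hp, hp] at e
      exact e.symm
    rw [periodic_iff_per_dvd, hper] at this
    have := Nat.le_of_dvd (by omega) this
    omega
  have hLinj : Function.Injective fun i : Fin n => L i := by
    intro i j h
    rcases lt_trichotomy i j with h1 | h1 | h1
    · exact absurd h (hLne _ _ h1)
    · exact h1
    · exact absurd h.symm (hLne _ _ h1)
  -- a strict lexicographic comparison compares first letters, then the remaining words
  have hhead : ∀ i j, L i ≤ L j → f i ≤ f j := by
    intro i j h
    rcases h.eq_or_lt with h | ⟨k, h1, h2⟩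
    · exact (by simpa using congrFun (toLex.injective h) 0 : f i = f j).le
    · rcases Nat.eq_zero_or_pos k with rfl | hk
      · simpa [L] using h2.le
      · exact (by simpa [L] using h1 0 hk : f i = f j).le
  have htail : ∀ i j, L i < L j → f i = f j → L (i + 1) < L (j + 1) := by
    rintro i j ⟨k, h1, h2⟩ h
    rcases k with _ | k
    · exact absurd h (by simpa [L] using h2.ne)
    · refine ⟨k, fun m hm => ?_, ?_⟩
      · have := h1 (m + 1) (by omega)
        simpa [L, add_assoc, add_comm 1] using this
      · simpa [L, add_assoc, add_comm 1] using h2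
  let s : Equiv.Perm (Fin n) := Tuple.sort fun i : Fin n => L i
  have hsm : Monotone fun i : Fin n => L (s i) := Tuple.monotone_sort fun i : Fin n => L i
  have hs : StrictMono fun i : Fin n => L (s i) :=
    hsm.strictMono_of_injective (hLinj.comp s.injective)
  have hb : ∀ x, f (s x) = blk I x :=
    eq_blk_of_monotone hc s fun a b h => hhead _ _ (hsm h)
  let π : Equiv.Perm (Fin n) := (s.trans (Equiv.addRight 1)).trans s.symm
  have hπ : ∀ y, s (π y) = s y + 1 := fun y => by simp [π]
  have hπk : ∀ (k : ℕ) y, s ((π ^ k) y) = s y + Fin.ofNat n k := by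
    intro k y
    induction k with
    | zero => ext; simp
    | succ k ih =>
      rw [pow_succ', Equiv.Perm.mul_apply, hπ, ih]
      ext; simp [Fin.val_add, add_assoc]
  refine ⟨π, s.symm 0, fun x y => ?_, ?_, ?_⟩
  · refine ⟨(s y - s x).val, s.injective ?_⟩
    rw [hπk, Fin.val_ofNat_lt]
    abel
  · rw [descSet_subset_iff]
    intro y z hyz h
    rw [← hs.lt_iff_lt, hπ, hπ]
    have hsucc : ∀ i : Fin n, L (i + 1 : Fin n) = L (i.val + 1) := fun i => by
      rw [← hLmod (i.val + 1)]
      simp [Fin.val_add]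
    rw [hsucc, hsucc]
    exact htail _ _ (hs hyz) (by rw [hb, hb, h])
  · funext k
    rw [itin, ← hb, hπk, Equiv.apply_symm_apply, zero_add, Fin.val_ofNat, apply_mod hp]

lemma card_cycles {n : ℕ} (hn : 0 < n) (I : Finset ℕ) :
    n * alphaC n I = Nat.card {f // IsWord n I f ∧ per f = n} := by
  have e : {π : Equiv.Perm (Fin n) // IsFullCycle π ∧ descSet π ⊆ I} × Fin n ≃
      {f // IsWord n I f ∧ per f = n} :=
    Equiv.ofBijective
      (fun p => ⟨itin I p.1.1 p.2, itin_isWord p.1.2.1 _, itin_per p.1.2.1 p.1.2.2 _⟩) <| by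
      constructor
      · rintro ⟨⟨π, h1, h2⟩, x⟩ ⟨⟨τ, h3, h4⟩, y⟩ h
        obtain ⟨rfl, rfl⟩ := itin_injective h1 h2 h3 h4 (congrArg Subtype.val h)
        rfl
      · rintro ⟨f, hf, hper⟩
        obtain ⟨π, x, h1, h2, h3⟩ := itin_surjective hn hf hper
        exact ⟨⟨⟨π, h1, h2⟩, x⟩, Subtype.ext h3⟩
  rw [← Nat.card_congr e, Nat.card_prod, Nat.card_fin, mul_comm, alphaC]

/-! ### Möbius inversion -/

lemma sum_divisors_moebius (n : ℕ) :
    ∑ d ∈ n.divisors, (ArithmeticFunction.moebius d : ℚ) = if n = 1 then 1 else 0 := by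
  have h := congrArg (fun F : ArithmeticFunction ℤ => F n) ArithmeticFunction.moebius_mul_coe_zeta
  simp only [ArithmeticFunction.coe_mul_zeta_apply, ArithmeticFunction.one_apply] at h
  exact_mod_cast congrArg (Int.cast : ℤ → ℚ) h

/-- Summing `μ d` over those `d` for which a word is a `d`-th power detects primitive words. -/
lemma sum_moebius_periodic {n : ℕ} (hn : 0 < n) {I : Finset ℕ} (hI : I ⊆ Ioo 0 n) {f : ℕ → ℕ}
    (hf : IsWord n I f) :
    ∑ d ∈ ((insert n I).gcd id).divisors with per f ∣ n / d, (ArithmeticFunction.moebius d : ℚ) =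
      if per f = n then 1 else 0 := by
  obtain ⟨e, he⟩ := (periodic_iff_per_dvd f n).1 hf.1
  have hm : 0 < per f := Nat.pos_of_ne_zero fun h => by simp [h] at he; omega
  have he0 : 0 < e := Nat.pos_of_ne_zero fun h => by simp [h] at he; omega
  have hg : (insert n I).gcd id ∣ n := gcd_dvd (mem_insert_self n I)
  have heg : e ∣ (insert n I).gcd id := by
    refine dvd_gcd fun i hi => ?_
    rcases mem_insert.1 hi with rfl | hi
    · exact ⟨per f, by rw [id, mul_comm, ← he]⟩
    · exact dvd_of_isWord hI hf ((periodic_iff_per_dvd f _).2 dvd_rfl) (by rw [mul_comm]; exact he) hi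
  have hset : {d ∈ ((insert n I).gcd id).divisors | per f ∣ n / d} = e.divisors := by
    ext d
    simp only [mem_filter, Nat.mem_divisors]
    have hg0 : (insert n I).gcd id ≠ 0 := fun h => by rw [h, zero_dvd_iff] at hg; omega
    constructor
    · rintro ⟨⟨hd, _⟩, h⟩
      refine ⟨?_, he0.ne'⟩
      have hdn := hd.trans hg
      have : d * per f ∣ n := (Nat.dvd_div_iff_mul_dvd hdn).1 h
      rw [he, mul_comm d] at this
      exact Nat.dvd_of_mul_dvd_mul_left hm this
    · rintro ⟨hd, _⟩
      refine ⟨⟨hd.trans heg, hg0⟩, ?_⟩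
      rw [Nat.dvd_div_iff_mul_dvd ((hd.trans heg).trans hg), he, mul_comm d]
      exact Nat.mul_dvd_mul_left _ hd
  rw [hset, sum_divisors_moebius]
  have : e = 1 ↔ per f = n := by
    constructor
    · rintro rfl; omega
    · intro h
      rw [h] at he
      exact (Nat.mul_eq_left hn.ne').1 he.symm
  simp only [this]

/-- Theorem (main theorem, part (b)): for all `I ⊆ [n-1]`,
`α^cyc_n(I) = (1/n) Σ_{d ∣ gcd(I ∪ {n})} μ(d) · α_{n/d}(I/d)`. -/
theorem alphaC_eq_moebius_sum (n : ℕ) (hn : 0 < n) (I : Finset ℕ) (hI : I ⊆ Finset.Ioo 0 n) :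
    (alphaC n I : ℚ) =
      (1 / n) * ∑ d ∈ ((insert n I).gcd id).divisors,
        (ArithmeticFunction.moebius d : ℚ) * alphaP (n / d) (divSet I d) := by
  classical
  set g := (insert n I).gcd id with hg
  obtain ⟨e⟩ := alphaP_eq_card_words hn I
  have hfin : Set.Finite {f | IsWord n I f} := Set.finite_coe_iff.1 (Finite.of_equiv _ e)
  let P := hfin.toFinset
  have hP : ∀ f, f ∈ P ↔ IsWord n I f := fun f => hfin.mem_toFinset
  have hα : ∀ d ∈ g.divisors, alphaP (n / d) (divSet I d) = #{f ∈ P | per f ∣ n / d} := by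
    intro d hd
    have hdg := Nat.dvd_of_mem_divisors hd
    have hd0 : 0 < d := Nat.pos_of_mem_divisors hd
    have hdn : d ∣ n := hdg.trans (gcd_dvd (mem_insert_self n I))
    have hdI : ∀ i ∈ I, d ∣ i := fun i hi => hdg.trans (gcd_dvd (mem_insert_of_mem hi))
    obtain ⟨e'⟩ := alphaP_eq_card_words (Nat.div_pos (Nat.le_of_dvd hn hdn) hd0) (divSet I d)
    rw [alphaP, Nat.card_congr e']
    refine Nat.subtype_card _ fun f => ?_
    rw [mem_filter, hP, ← periodic_iff_per_dvd, ← isWord_div_iff hd0 hdI, Nat.mul_div_cancel' hdn]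
  have hC : n * alphaC n I = #{f ∈ P | per f = n} := by
    rw [card_cycles hn]
    refine Nat.subtype_card _ fun f => ?_
    rw [mem_filter, hP]
  have hsum : ∑ d ∈ g.divisors, (ArithmeticFunction.moebius d : ℚ) * alphaP (n / d) (divSet I d) =
      (n * alphaC n I : ℕ) := by
    calc ∑ d ∈ g.divisors, (ArithmeticFunction.moebius d : ℚ) * alphaP (n / d) (divSet I d)
        = ∑ d ∈ g.divisors, ∑ f ∈ P,
            if per f ∣ n / d then (ArithmeticFunction.moebius d : ℚ) else 0 := by
          refine sum_congr rfl fun d hd => ?_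
          rw [hα d hd, ← sum_filter, sum_const, nsmul_eq_mul, mul_comm]
      _ = ∑ f ∈ P, if per f = n then (1 : ℚ) else 0 := by
          rw [sum_comm]
          refine sum_congr rfl fun f hf => ?_
          rw [← sum_filter, sum_moebius_periodic hn hI ((hP f).1 hf)]
      _ = (n * alphaC n I : ℕ) := by
          rw [hC, sum_boole]
  have hn' : (n : ℚ) ≠ 0 := by exact_mod_cast hn.ne'
  rw [hsum]
  push_cast
  field_simp
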